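/- The function A ↦ Σᵢ₌₁ⁿ arctan λᵢ(A), where λ₁(A) ≤ ⋯ ≤ λₙ(A) are the eigenvalues of A, is concave on the convex cone of symmetric positive semidefinite n×n real matrices. -/

import Mathlib

/-- `F(A) = ∑ᵢ arctan λᵢ(A)`, the sum of the arctangents of the eigenvalues of a
symmetric matrix `A` (junk value `0` if `A` is not symmetric). -/
noncomputable def lagF {n : ℕ} (A : Matrix (Fin n) (Fin n) ℝ) : ℝ :=
  if h : A.IsHermitian then ∑ i, Real.arctan (h.eigenvalues i) else 0

theorem arctan_concaveOn_aux : ConcaveOn ℝ (Set.Ici (0:ℝ)) Real.arctan := by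
  apply AntitoneOn.concaveOn_of_deriv (convex_Ici 0) Real.continuous_arctan.continuousOn
    Real.differentiable_arctan.differentiableOn
  intro x hx y hy hxy
  simp only [interior_Ici, Set.mem_Ioi] at hx hy
  simp only [Real.deriv_arctan]
  gcongr

/-- Jensen step: diagonal entries of an orthogonal conjugate. -/
theorem peierls_aux {n : ℕ} {A U : Matrix (Fin n) (Fin n) ℝ} (hA : A.PosSemidef)
    (hU : U ∈ Matrix.unitaryGroup (Fin n) ℝ) :
    ∑ j, Real.arctan (hA.1.eigenvalues j) ≤ ∑ i, Real.arctan ((star U * A * U) i i) := by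
  set W : Matrix (Fin n) (Fin n) ℝ := star U * (hA.1.eigenvectorUnitary : Matrix _ _ ℝ) with hW
  have hWm : W ∈ Matrix.unitaryGroup (Fin n) ℝ :=
    mul_mem (Unitary.star_mem hU) hA.1.eigenvectorUnitary.2
  have h1 : ∀ i, ∑ j, W i j ^ 2 = 1 := by
    intro i
    have := congrFun (congrFun (Matrix.mem_unitaryGroup_iff.1 hWm) i) i
    simpa [Matrix.mul_apply, Matrix.star_apply, pow_two] using this
  have h2 : ∀ j, ∑ i, W i j ^ 2 = 1 := by
    intro j
    have := congrFun (congrFun (Matrix.mem_unitaryGroup_iff'.1 hWm) j) j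
    simpa [Matrix.mul_apply, Matrix.star_apply, pow_two] using this
  have h3 : star U * A * U = W * Matrix.diagonal hA.1.eigenvalues * star W := by
    conv_lhs => rw [hA.1.spectral_theorem, Unitary.conjStarAlgAut_apply]
    rw [hW, star_mul, star_star]
    simp only [Matrix.mul_assoc]
    rfl
  have h4 : ∀ i, (star U * A * U) i i = ∑ j, W i j ^ 2 * hA.1.eigenvalues j := by
    intro i
    rw [h3, Matrix.mul_apply]
    refine Finset.sum_congr rfl fun j _ => ?_
    rw [Matrix.mul_diagonal, Matrix.star_apply, star_trivial]
    ring
  calc ∑ j, Real.arctan (hA.1.eigenvalues j)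
      = ∑ j, ∑ i, W i j ^ 2 * Real.arctan (hA.1.eigenvalues j) := by
        refine Finset.sum_congr rfl fun j _ => ?_
        rw [← Finset.sum_mul, h2, one_mul]
    _ = ∑ i, ∑ j, W i j ^ 2 * Real.arctan (hA.1.eigenvalues j) := Finset.sum_comm
    _ ≤ _ := by
        refine Finset.sum_le_sum fun i _ => ?_
        rw [h4]
        exact arctan_concaveOn_aux.le_map_sum (t := Finset.univ) (w := fun j => W i j ^ 2)
          (p := hA.1.eigenvalues) (fun j _ => sq_nonneg _) (h1 i)
          (fun j _ => hA.eigenvalues_nonneg j)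

theorem diag_nonneg_aux {n : ℕ} {A : Matrix (Fin n) (Fin n) ℝ} (U : Matrix (Fin n) (Fin n) ℝ)
    (hA : A.PosSemidef) (i : Fin n) : 0 ≤ (star U * A * U) i i :=
  (hA.conjTranspose_mul_mul_same U).diag_nonneg

/-- The function `A ↦ ∑ᵢ arctan λᵢ(A)` is concave on the convex cone of symmetric
positive semidefinite `n × n` real matrices. -/
theorem lagF_concave_on_posSemidef (n : ℕ) :
    ConcaveOn ℝ {A : Matrix (Fin n) (Fin n) ℝ | A.PosSemidef} lagF := by
  have hconv : ∀ (A B : Matrix (Fin n) (Fin n) ℝ), A.PosSemidef → B.PosSemidef →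
      ∀ a b : ℝ, 0 ≤ a → 0 ≤ b → (a • A + b • B).PosSemidef :=
    fun A B hA hB a b ha hb => (hA.smul ha).add (hB.smul hb)
  refine ⟨fun A hA B hB a b ha hb _ => hconv A B hA hB a b ha hb, ?_⟩
  intro A hA B hB a b ha hb hab
  have hC := hconv A B hA hB a b ha hb
  simp only [Set.mem_ofPred_eq] at hA hB
  rw [lagF, lagF, lagF, dif_pos hA.1, dif_pos hB.1, dif_pos hC.1]
  set U : Matrix (Fin n) (Fin n) ℝ := hC.1.eigenvectorUnitary.1 with hU
  have hUm : U ∈ Matrix.unitaryGroup (Fin n) ℝ := hC.1.eigenvectorUnitary.2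
  have hd : star U * (a • A + b • B) * U = Matrix.diagonal hC.1.eigenvalues := by
    have := hC.1.conjStarAlgAut_star_eigenvectorUnitary
    rw [Unitary.conjStarAlgAut_star_apply] at this
    exact this
  have he : ∀ i, hC.1.eigenvalues i = a • (star U * A * U) i i + b • (star U * B * U) i i := by
    intro i
    have := congrFun (congrFun hd i) i
    rw [Matrix.diagonal_apply_eq] at this
    rw [← this]
    simp [Matrix.mul_add, Matrix.add_mul]
  calc _ ≤ a • ∑ i, Real.arctan ((star U * A * U) i i)
        + b • ∑ i, Real.arctan ((star U * B * U) i i) := by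
        have := peierls_aux hA hUm
        have := peierls_aux hB hUm
        simp only [smul_eq_mul]
        gcongr
    _ = ∑ i, (a • Real.arctan ((star U * A * U) i i)
        + b • Real.arctan ((star U * B * U) i i)) := by
        rw [Finset.sum_add_distrib, Finset.smul_sum, Finset.smul_sum]
    _ ≤ _ := by
        refine Finset.sum_le_sum fun i _ => ?_
        rw [he]
        exact arctan_concaveOn_aux.2 (diag_nonneg_aux U hA i) (diag_nonneg_aux U hB i) ha hb hab
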